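/- Let G be a finite simple graph with n vertices and e edges, minimum degree δ ≥ 1, maximum degree Δ, and independence number β. Then F(G) ≥ (n − β)·δ³ + (δ/β)·( 2β·(β·δ² + e²/(n − β)) − e² − 2β·(n − β)·Δ² ), with equality if and only if G is a regular balanced bipartite graph. -/

import Mathlib

open Finset

/-- The first Zagreb index of a graph: the sum of the squares of the vertex degrees. -/
def zagreb1 {V : Type*} [Fintype V] (G : SimpleGraph V) [DecidableRel G.Adj] : ℝ :=
  ∑ u, (G.degree u : ℝ) ^ 2

/-- The forgotten topological index of a graph: the sum of the cubes of the vertex degrees. -/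
def forgottenIndex {V : Type*} [Fintype V] (G : SimpleGraph V) [DecidableRel G.Adj] : ℝ :=
  ∑ u, (G.degree u : ℝ) ^ 3

/-- The inverse degree of a graph: the sum of the reciprocals of the vertex degrees. -/
noncomputable def invDegree {V : Type*} [Fintype V] (G : SimpleGraph V) [DecidableRel G.Adj] : ℝ :=
  ∑ u, 1 / (G.degree u : ℝ)

/-- The independence number of a graph: the largest cardinality of a set of pairwise
nonadjacent vertices. -/
noncomputable def indepNum {V : Type*} [Fintype V] (G : SimpleGraph V) : ℕ :=
  sSup {k | ∃ s : Finset V, s.card = k ∧ ∀ u ∈ s, ∀ v ∈ s, ¬ G.Adj u v}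

/-- A graph is a regular balanced bipartite graph if its vertices can be partitioned into
two parts of equal size with every edge joining the two parts, and all vertices have the
same degree. -/
def IsRegularBalancedBipartite {V : Type*} [Fintype V] (G : SimpleGraph V) [DecidableRel G.Adj] : Prop :=
  ∃ (A : Finset V) (r : ℕ), 2 * A.card = Fintype.card V ∧
    (∀ u v, G.Adj u v → (u ∈ A ↔ v ∉ A)) ∧ G.IsRegularOfDegree r

/-- A graph is `k`-connected if it has more than `k` vertices and removing any set of
fewer than `k` vertices leaves a connected graph. -/
def IsKConnected {V : Type*} [Fintype V] (G : SimpleGraph V) (k : ℕ) : Prop :=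
  k < Fintype.card V ∧
    ∀ S : Finset V, S.card < k → (G.induce (↑S : Set V)ᶜ).Connected

/-- A graph is traceable if it has a Hamiltonian path. -/
def IsTraceable {V : Type*} [DecidableEq V] (G : SimpleGraph V) : Prop :=
  ∃ (u v : V) (p : G.Walk u v), p.IsHamiltonian

/-- The independence number is attained by an independent set and bounds all of them. -/
theorem exists_indep_card_eq_indepNum {V : Type*} [Fintype V] (G : SimpleGraph V) :
    (∃ s : Finset V, s.card = indepNum G ∧ ∀ u ∈ s, ∀ v ∈ s, ¬ G.Adj u v) ∧
      ∀ s : Finset V, (∀ u ∈ s, ∀ v ∈ s, ¬ G.Adj u v) → s.card ≤ indepNum G := by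
  have hb : BddAbove {k | ∃ s : Finset V, s.card = k ∧ ∀ u ∈ s, ∀ v ∈ s, ¬ G.Adj u v} := by
    refine ⟨Fintype.card V, ?_⟩
    rintro k ⟨s, rfl, -⟩
    exact s.card_le_univ
  have hne : {k | ∃ s : Finset V, s.card = k ∧ ∀ u ∈ s, ∀ v ∈ s, ¬ G.Adj u v}.Nonempty :=
    ⟨0, ∅, by simp⟩
  exact ⟨Nat.sSup_mem hne hb, fun s hs => le_csSup hb ⟨s, rfl, hs⟩⟩

section IndependentSet

variable {V : Type*} [Fintype V] [DecidableEq V] {G : SimpleGraph V} [DecidableRel G.Adj]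
  {s : Finset V}

theorem card_biUnion_incidenceFinset_of_indep (hs : ∀ u ∈ s, ∀ v ∈ s, ¬ G.Adj u v) :
    (s.biUnion fun u => G.incidenceFinset u).card = ∑ u ∈ s, G.degree u := by
  rw [Finset.card_biUnion]
  · simp
  · intro u hu v hv huv
    refine Finset.disjoint_left.2 fun x hxu hxv => ?_
    rw [SimpleGraph.mem_incidenceFinset] at hxu hxv
    exact hs u hu v hv (G.adj_of_mem_incidenceSet huv hxu hxv)

theorem biUnion_incidenceFinset_subset :
    (s.biUnion fun u => G.incidenceFinset u) ⊆ G.edgeFinset :=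
  Finset.biUnion_subset.2 fun u _ => G.incidenceFinset_subset u

theorem sum_degree_le_card_edgeFinset (hs : ∀ u ∈ s, ∀ v ∈ s, ¬ G.Adj u v) :
    ∑ u ∈ s, G.degree u ≤ G.edgeFinset.card := by
  rw [← card_biUnion_incidenceFinset_of_indep hs]
  exact Finset.card_le_card biUnion_incidenceFinset_subset

/-- If the degrees over an independent set add up to the number of edges, then every edge joins
the set to its complement. -/
theorem mem_iff_notMem_of_sum_degree_eq (hs : ∀ u ∈ s, ∀ v ∈ s, ¬ G.Adj u v)
    (h : ∑ u ∈ s, G.degree u = G.edgeFinset.card) {u v : V} (huv : G.Adj u v) :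
    u ∈ s ↔ v ∉ s := by
  refine ⟨fun hu hv => hs u hu v hv huv, fun hv => ?_⟩
  have heq : (s.biUnion fun u => G.incidenceFinset u) = G.edgeFinset :=
    Finset.eq_of_subset_of_card_le biUnion_incidenceFinset_subset
      (by rw [card_biUnion_incidenceFinset_of_indep hs, h])
  have hmem : s(u, v) ∈ s.biUnion fun u => G.incidenceFinset u := by
    rw [heq, SimpleGraph.mem_edgeFinset]
    exact huv
  obtain ⟨w, hw, hwe⟩ := Finset.mem_biUnion.1 hmem
  rw [SimpleGraph.mem_incidenceFinset] at hwe
  rcases Sym2.mem_iff.1 hwe.2 with rfl | rfl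
  · exact hw
  · exact absurd hw hv

theorem card_mul_minDegree_le_card_edgeFinset (hs : ∀ u ∈ s, ∀ v ∈ s, ¬ G.Adj u v) :
    s.card * G.minDegree ≤ G.edgeFinset.card :=
  (Finset.card_nsmul_le_sum s _ _ fun u _ => G.minDegree_le_degree u).trans
    (sum_degree_le_card_edgeFinset hs)

theorem card_edgeFinset_le_card_compl_mul_maxDegree (hs : ∀ u ∈ s, ∀ v ∈ s, ¬ G.Adj u v) :
    G.edgeFinset.card ≤ sᶜ.card * G.maxDegree := by
  have hle : ∑ u ∈ sᶜ, G.degree u ≤ sᶜ.card * G.maxDegree :=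
    Finset.sum_le_card_nsmul _ _ _ fun u _ => G.degree_le_maxDegree u
  have hsum := Finset.sum_add_sum_compl s fun u => G.degree u
  have htwo := G.sum_degrees_eq_twice_card_edges
  have hD := sum_degree_le_card_edgeFinset hs
  omega

end IndependentSet

theorem card_mul_minDegree_pow_le_forgottenIndex {V : Type*} [Fintype V] (G : SimpleGraph V)
    [DecidableRel G.Adj] :
    (Fintype.card V : ℝ) * (G.minDegree : ℝ) ^ 3 ≤ forgottenIndex G := by
  have h := Finset.card_nsmul_le_sum (Finset.univ : Finset V)
    (fun u => (G.degree u : ℝ) ^ 3) ((G.minDegree : ℝ) ^ 3)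
    fun u _ => by have := G.minDegree_le_degree u; gcongr
  simpa [forgottenIndex] using h

theorem isRegularOfDegree_minDegree_of_forgottenIndex_le {V : Type*} [Fintype V]
    (G : SimpleGraph V) [DecidableRel G.Adj]
    (h : forgottenIndex G ≤ (Fintype.card V : ℝ) * (G.minDegree : ℝ) ^ 3) :
    G.IsRegularOfDegree G.minDegree := by
  have hle : ∀ u ∈ (Finset.univ : Finset V),
      (G.minDegree : ℝ) ^ 3 ≤ (G.degree u : ℝ) ^ 3 := fun u _ => by
    have := G.minDegree_le_degree u
    gcongr
  have heq : ∑ _u : V, (G.minDegree : ℝ) ^ 3 = ∑ u, (G.degree u : ℝ) ^ 3 :=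
    le_antisymm (Finset.sum_le_sum hle) (by simpa [forgottenIndex] using h)
  intro u
  have hu := (Finset.sum_eq_sum_iff_of_le hle).1 heq u (Finset.mem_univ u)
  have hu' : G.minDegree ^ 3 = G.degree u ^ 3 := by exact_mod_cast hu
  exact (Nat.pow_left_injective (by norm_num : 3 ≠ 0) hu').symm

theorem card_mul_eq_two_mul_card_edgeFinset {V : Type*} [Fintype V] {G : SimpleGraph V}
    [DecidableRel G.Adj] {r : ℕ} (h : G.IsRegularOfDegree r) :
    Fintype.card V * r = 2 * G.edgeFinset.card := by
  rw [← G.sum_degrees_eq_twice_card_edges]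
  simp [h.degree_eq]

/-- For a graph `G` with `n` vertices, `e` edges, minimum degree `δ ≥ 1`, maximum degree `Δ`,
and independence number `β`:
`F(G) ≥ (n − β)δ³ + (δ/β)(2β(βδ² + e²/(n − β)) − e² − 2β(n − β)Δ²)`, with equality iff
`G` is a regular balanced bipartite graph. -/
theorem stmt3 {V : Type*} [Fintype V] [DecidableEq V] (G : SimpleGraph V) [DecidableRel G.Adj]
    (hδ : 1 ≤ G.minDegree) :
    forgottenIndex G ≥ ((Fintype.card V : ℝ) - indepNum G) * (G.minDegree : ℝ) ^ 3
        + ((G.minDegree : ℝ) / indepNum G) *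
          (2 * (indepNum G : ℝ) * ((indepNum G : ℝ) * (G.minDegree : ℝ) ^ 2
              + (G.edgeFinset.card : ℝ) ^ 2 / ((Fintype.card V : ℝ) - indepNum G))
            - (G.edgeFinset.card : ℝ) ^ 2
            - 2 * (indepNum G : ℝ) * ((Fintype.card V : ℝ) - indepNum G)
              * (G.maxDegree : ℝ) ^ 2) ∧
    (forgottenIndex G = ((Fintype.card V : ℝ) - indepNum G) * (G.minDegree : ℝ) ^ 3
        + ((G.minDegree : ℝ) / indepNum G) *
          (2 * (indepNum G : ℝ) * ((indepNum G : ℝ) * (G.minDegree : ℝ) ^ 2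
              + (G.edgeFinset.card : ℝ) ^ 2 / ((Fintype.card V : ℝ) - indepNum G))
            - (G.edgeFinset.card : ℝ) ^ 2
            - 2 * (indepNum G : ℝ) * ((Fintype.card V : ℝ) - indepNum G)
              * (G.maxDegree : ℝ) ^ 2)
      ↔ IsRegularBalancedBipartite G) := by
  obtain ⟨⟨s, hcard, hs⟩, hmax⟩ := exists_indep_card_eq_indepNum G
  have hV : Nonempty V := by
    by_contra hne
    rw [not_nonempty_iff] at hne
    simp [SimpleGraph.minDegree] at hδ
  have hβ : 0 < indepNum G := by
    obtain ⟨v⟩ := hV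
    exact (Finset.card_pos.2 ⟨v, by simp⟩).trans_le (hmax {v} (by simp))
  have hlow := card_mul_minDegree_le_card_edgeFinset hs
  have hupp := card_edgeFinset_le_card_compl_mul_maxDegree hs
  have hcompl := s.card_add_card_compl
  rw [hcard] at hlow hcompl
  have hm : 0 < sᶜ.card := by
    have he : 0 < G.edgeFinset.card := lt_of_lt_of_le (Nat.mul_pos hβ hδ) hlow
    exact Nat.pos_of_mul_pos_right (lt_of_lt_of_le he hupp)
  have hF := card_mul_minDegree_pow_le_forgottenIndex G
  have hF' := isRegularOfDegree_minDegree_of_forgottenIndex_le G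
  have hn : (Fintype.card V : ℝ) = indepNum G + sᶜ.card := by exact_mod_cast hcompl.symm
  have hlowR : (indepNum G : ℝ) * G.minDegree ≤ G.edgeFinset.card := by exact_mod_cast hlow
  have huppR : (G.edgeFinset.card : ℝ) ≤ sᶜ.card * G.maxDegree := by exact_mod_cast hupp
  have hδR : (0 : ℝ) < G.minDegree := by exact_mod_cast hδ
  have hβR : (0 : ℝ) < indepNum G := by exact_mod_cast hβ
  have hmR : (0 : ℝ) < sᶜ.card := by exact_mod_cast hm
  have hrhs : ((Fintype.card V : ℝ) - indepNum G) * (G.minDegree : ℝ) ^ 3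
        + ((G.minDegree : ℝ) / indepNum G) *
          (2 * (indepNum G : ℝ) * ((indepNum G : ℝ) * (G.minDegree : ℝ) ^ 2
              + (G.edgeFinset.card : ℝ) ^ 2 / ((Fintype.card V : ℝ) - indepNum G))
            - (G.edgeFinset.card : ℝ) ^ 2
            - 2 * (indepNum G : ℝ) * ((Fintype.card V : ℝ) - indepNum G)
              * (G.maxDegree : ℝ) ^ 2)
      = Fintype.card V * (G.minDegree : ℝ) ^ 3
        - (G.minDegree : ℝ) / indepNum G
          * ((G.edgeFinset.card : ℝ) ^ 2 - (indepNum G * G.minDegree) ^ 2)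
        - 2 * (G.minDegree : ℝ) / sᶜ.card
          * ((sᶜ.card * G.maxDegree : ℝ) ^ 2 - (G.edgeFinset.card : ℝ) ^ 2) := by
    rw [hn, add_sub_cancel_left]
    field_simp
    ring
  have hgap₁ : 0 ≤ (G.minDegree : ℝ) / indepNum G
      * ((G.edgeFinset.card : ℝ) ^ 2 - (indepNum G * G.minDegree) ^ 2) :=
    mul_nonneg (by positivity) (sub_nonneg.2 (by gcongr))
  have hgap₂ : 0 ≤ 2 * (G.minDegree : ℝ) / sᶜ.card
      * ((sᶜ.card * G.maxDegree : ℝ) ^ 2 - (G.edgeFinset.card : ℝ) ^ 2) :=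
    mul_nonneg (by positivity) (sub_nonneg.2 (by gcongr))
  rw [hrhs]
  refine ⟨by linarith, fun h => ?_, ?_⟩
  · have hreg := hF' (by linarith)
    have hzero : (G.minDegree : ℝ) / indepNum G
        * ((G.edgeFinset.card : ℝ) ^ 2 - (indepNum G * G.minDegree) ^ 2) = 0 := by linarith
    have hsq : (G.edgeFinset.card : ℝ) ^ 2 = (indepNum G * G.minDegree) ^ 2 :=
      sub_eq_zero.1 ((mul_eq_zero.1 hzero).resolve_left (by positivity))
    have hsqN : G.edgeFinset.card ^ 2 = (indepNum G * G.minDegree) ^ 2 := by exact_mod_cast hsq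
    have he : G.edgeFinset.card = indepNum G * G.minDegree :=
      Nat.pow_left_injective (by norm_num : 2 ≠ 0) hsqN
    refine ⟨s, G.minDegree, ?_, fun u v huv => mem_iff_notMem_of_sum_degree_eq hs ?_ huv, hreg⟩
    · have h2 := card_mul_eq_two_mul_card_edgeFinset hreg
      rw [he, ← mul_assoc] at h2
      rw [hcard]
      exact (Nat.eq_of_mul_eq_mul_right hδ h2).symm
    · rw [he, Finset.sum_congr rfl fun u _ => hreg.degree_eq u]
      simp [hcard]
  · rintro ⟨A, r, hA, hbip, hreg⟩
    have hmin : G.minDegree = r := by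
      obtain ⟨v, hv⟩ := G.exists_minimal_degree_vertex
      rw [hv, hreg.degree_eq]
    have hmaxd : G.maxDegree = r := by
      obtain ⟨v, hv⟩ := G.exists_maximal_degree_vertex
      rw [hv, hreg.degree_eq]
    have hAβ := hmax A fun u hu v hv huv => (hbip u v huv).1 hu hv
    have h2 := card_mul_eq_two_mul_card_edgeFinset hreg
    rw [hmin] at hlow hδ
    have hβA : indepNum G ≤ A.card := by
      refine Nat.le_of_mul_le_mul_right ?_ hδ
      rw [← hA, mul_assoc] at h2
      omega
    have hβeq : indepNum G = A.card := le_antisymm hβA hAβ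
    have hmeq : sᶜ.card = indepNum G := by omega
    have he : G.edgeFinset.card = indepNum G * r := by
      rw [← hA, mul_assoc, ← hβeq] at h2
      omega
    rw [hmin, hmaxd, hmeq, he]
    simp [forgottenIndex, hreg.degree_eq]
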